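/- arXiv:1009.2460 — 2 statements merged into one kernel-verified Lean document; each statement's English description precedes it below -/
import Mathlib

section
/- Let R be a commutative ring, M a finite free R-module of rank h, and f : M → M an R-linear endomorphism. For every 1 ≤ j ≤ h, the determinant of the induced endomorphism Λ^j f of the j-th exterior power Λ^j M (a free module of rank C(h,j)) equals (det f)^{C(h−1, j−1)}, where C denotes the binomial coefficient. -/
/-- The image of the `n`-th exterior power under the algebra map induced by a linear map. -/
theorem extMap_mem {R : Type*} [CommRing R] {M N : Type*} [AddCommGroup M] [Module R M]
    [AddCommGroup N] [Module R N] (n : ℕ) (f : M →ₗ[R] N) {x : ExteriorAlgebra R M}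
    (hx : x ∈ ⋀[R]^n M) : ExteriorAlgebra.map f x ∈ ⋀[R]^n N := by
  rw [← ExteriorAlgebra.ιMulti_span_fixedDegree] at hx ⊢
  refine Submodule.span_induction ?_ ?_ ?_ ?_ hx
  · rintro x ⟨v, rfl⟩
    rw [ExteriorAlgebra.map_apply_ιMulti]
    exact Submodule.subset_span ⟨f ∘ v, rfl⟩
  · simp
  · intro x y _ _ hx hy
    rw [map_add]
    exact Submodule.add_mem _ hx hy
  · intro r x _ hx
    rw [map_smul]
    exact Submodule.smul_mem _ r hx

/-- The linear map `⋀[R]^n M → ⋀[R]^n N` functorially induced by a linear map `f : M → N`;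
it sends `x₁ ∧ ⋯ ∧ xₙ` to `f x₁ ∧ ⋯ ∧ f xₙ`. -/
noncomputable def extPowMap {R : Type*} [CommRing R] {M N : Type*} [AddCommGroup M] [Module R M]
    [AddCommGroup N] [Module R N] (n : ℕ) (f : M →ₗ[R] N) : ⋀[R]^n M →ₗ[R] ⋀[R]^n N :=
  (ExteriorAlgebra.map f).toLinearMap.restrict fun x hx => extMap_mem n f hx

/-- The wedge product `v 0 ∧ ⋯ ∧ v (n-1)` as an element of the `n`-th exterior power. -/
noncomputable def wedgeProd (R : Type*) [CommRing R] {M : Type*} [AddCommGroup M] [Module R M]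
    (n : ℕ) (v : Fin n → M) : ⋀[R]^n M :=
  ⟨ExteriorAlgebra.ιMulti R n v, ExteriorAlgebra.ιMulti_range R n (Set.mem_range_self v)⟩

open Set.powersetCard in
/-- The `j`-th compound matrix. -/
noncomputable def cmpd {R : Type*} [CommRing R] {n : ℕ} (j : ℕ) (A : Matrix (Fin n) (Fin n) R) :
    Matrix (Set.powersetCard (Fin n) j) (Set.powersetCard (Fin n) j) R :=
  Matrix.of fun s t => (A.submatrix (ofFinEmbEquiv.symm s) (ofFinEmbEquiv.symm t)).det

theorem cmpd_map {R S : Type*} [CommRing R] [CommRing S] (φ : R →+* S) {n : ℕ} (j : ℕ)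
    (A : Matrix (Fin n) (Fin n) R) : cmpd j (A.map φ) = (cmpd j A).map φ := by
  ext s t
  simp only [cmpd, Matrix.of_apply, Matrix.map_apply, RingHom.map_det, RingHom.mapMatrix_apply,
    Matrix.submatrix_map]

theorem det_cmpd_map {R S : Type*} [CommRing R] [CommRing S] (φ : R →+* S) {n : ℕ} (j : ℕ)
    (A : Matrix (Fin n) (Fin n) R) : (cmpd j (A.map φ)).det = φ (cmpd j A).det := by
  rw [cmpd_map, RingHom.map_det, RingHom.mapMatrix_apply]

theorem toMatrix_map_eq_cmpd {R : Type*} [CommRing R] {M : Type*} [AddCommGroup M] [Module R M]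
    {n : ℕ} (j : ℕ) (b : Module.Basis (Fin n) R M) (f : M →ₗ[R] M) :
    LinearMap.toMatrix (b.exteriorPower j) (b.exteriorPower j) (exteriorPower.map j f) =
      cmpd j (LinearMap.toMatrix b b f) := by
  ext s t
  rw [LinearMap.toMatrix_apply, exteriorPower.basis_repr_apply, exteriorPower.basis_apply,
    exteriorPower.map_apply_ιMulti_family, exteriorPower.ιMulti_family,
    exteriorPower.ιMultiDual_apply_ιMulti, cmpd, Matrix.of_apply, ← Matrix.det_transpose]
  congr 1
  ext a c
  simp [LinearMap.toMatrix_apply]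

theorem cmpd_mul {R : Type*} [CommRing R] {n : ℕ} (j : ℕ) (A B : Matrix (Fin n) (Fin n) R) :
    cmpd j (A * B) = cmpd j A * cmpd j B := by
  have key := fun A : Matrix (Fin n) (Fin n) R =>
    toMatrix_map_eq_cmpd j (Pi.basisFun R (Fin n)) (Matrix.toLin' A)
  simp only [← Matrix.toLin_eq_toLin', LinearMap.toMatrix_toLin] at key
  rw [← key, ← key, ← key, ← LinearMap.toMatrix_comp, ← exteriorPower.map_comp, ← Matrix.toLin_mul]

theorem cmpd_diagonal {R : Type*} [CommRing R] {n : ℕ} (j : ℕ) (d : Fin n → R) :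
    cmpd j (Matrix.diagonal d) = Matrix.diagonal fun s => ∏ i ∈ s.1, d i := by
  ext s t
  rw [cmpd, Matrix.of_apply, Matrix.diagonal_apply]
  split_ifs with h
  · subst h
    rw [Matrix.submatrix_diagonal _ _ (Set.powersetCard.ofFinEmbEquiv.symm s).injective,
      Matrix.det_diagonal, Set.powersetCard.ofFinEmbEquiv_symm_apply]
    conv_rhs => rw [← Finset.image_orderEmbOfFin_univ s.1 s.2]
    rw [Finset.prod_image (fun _ _ _ _ h => (Finset.orderEmbOfFin s.1 s.2).injective h)]
    rfl
  · obtain ⟨i, his, hit⟩ := (Set.powersetCard.exists_mem_notMem_iff_ne s t).mp h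
    obtain ⟨k, rfl⟩ := (Set.powersetCard.mem_range_ofFinEmbEquiv_symm_iff_mem s i).mpr his
    apply Matrix.det_eq_zero_of_row_eq_zero k
    intro l
    rw [Matrix.submatrix_apply, Matrix.diagonal_apply_ne]
    intro e
    exact hit ((Set.powersetCard.mem_range_ofFinEmbEquiv_symm_iff_mem t _).mp ⟨l, e.symm⟩)

theorem cmpd_one {R : Type*} [CommRing R] {n : ℕ} (j : ℕ) :
    cmpd j (1 : Matrix (Fin n) (Fin n) R) = 1 := by
  rw [← Matrix.diagonal_one, cmpd_diagonal]
  simp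

theorem prod_powersetCard_prod {R : Type*} [CommRing R] {n : ℕ} (j : ℕ) (hj : 1 ≤ j)
    (d : Fin n → R) :
    ∏ s : Set.powersetCard (Fin n) j, ∏ i ∈ s.1, d i = (∏ i, d i) ^ (n - 1).choose (j - 1) := by
  have h1 : ∏ s : Set.powersetCard (Fin n) j, ∏ i ∈ s.1, d i =
      ∏ s ∈ Finset.powersetCard j (Finset.univ : Finset (Fin n)), ∏ i ∈ s, d i := by
    symm
    apply Finset.prod_subtype
    intro s
    simp [Set.powersetCard.mem_iff]
  have h2 : ∀ s : Finset (Fin n), ∏ i ∈ s, d i = ∏ i, if i ∈ s then d i else 1 := by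
    intro s
    simp
  rw [h1, Finset.prod_congr rfl (fun s _ => h2 s), Finset.prod_comm, ← Finset.prod_pow]
  refine Finset.prod_congr rfl fun i _ => ?_
  rw [← Finset.prod_filter, Finset.prod_const]
  congr 1
  have := Finset.card_filter_powersetCard_subset {i} (Finset.univ : Finset (Fin n)) j
    (by simp) (by simpa using hj)
  simpa using this

theorem det_cmpd_diagonal {R : Type*} [CommRing R] {n : ℕ} (j : ℕ) (hj : 1 ≤ j) (d : Fin n → R) :
    (cmpd j (Matrix.diagonal d)).det = (Matrix.diagonal d).det ^ (n - 1).choose (j - 1) := by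
  rw [cmpd_diagonal, Matrix.det_diagonal, Matrix.det_diagonal, prod_powersetCard_prod j hj]

theorem transvection_map {R S : Type*} [CommRing R] [CommRing S] (φ : R →+* S) {n : ℕ}
    (a b : Fin n) (c : R) :
    (Matrix.transvection a b c).map φ = Matrix.transvection a b (φ c) := by
  ext i k
  simp only [Matrix.transvection, Matrix.map_apply, Matrix.add_apply, Matrix.one_apply,
    Matrix.single_apply, map_add]
  split_ifs <;> simp

/-- The determinant of the compound of a generic transvection is a unit polynomial,
hence constant. -/
theorem det_cmpd_transvection {K : Type*} [Field K] {n : ℕ} (j : ℕ) (a b : Fin n) (hab : a ≠ b)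
    (c : K) : (cmpd j (Matrix.transvection a b c)).det = 1 := by
  let p : Polynomial K := (cmpd j (Matrix.transvection a b (Polynomial.X : Polynomial K))).det
  have hev : ∀ x : K, (cmpd j (Matrix.transvection a b x)).det = p.eval x := by
    intro x
    have := det_cmpd_map (Polynomial.evalRingHom x) j
      (Matrix.transvection a b (Polynomial.X : Polynomial K))
    rw [transvection_map] at this
    simpa using this
  have hu : IsUnit p := by
    refine IsUnit.of_mul_eq_one
      (cmpd j (Matrix.transvection a b (-Polynomial.X : Polynomial K))).det ?_
    rw [← Matrix.det_mul, ← cmpd_mul, Matrix.transvection_mul_transvection_same _ _ hab]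
    simp [cmpd_one]
  obtain ⟨r, -, hr⟩ := Polynomial.isUnit_iff.mp hu
  have h0 := hev 0
  rw [Matrix.transvection_zero, cmpd_one, Matrix.det_one, ← hr, Polynomial.eval_C] at h0
  rw [hev, ← hr, Polynomial.eval_C, ← h0]

theorem det_cmpd_field {K : Type*} [Field K] {n : ℕ} (j : ℕ) (hj : 1 ≤ j)
    (A : Matrix (Fin n) (Fin n) K) : (cmpd j A).det = A.det ^ (n - 1).choose (j - 1) := by
  refine Matrix.diagonal_transvection_induction
    (fun A => (cmpd j A).det = A.det ^ (n - 1).choose (j - 1)) A ?_ ?_ ?_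
  · intro d _
    exact det_cmpd_diagonal j hj d
  · intro t
    rw [Matrix.TransvectionStruct.det, one_pow]
    exact det_cmpd_transvection j t.i t.j t.hij t.c
  · intro A B hA hB
    rw [cmpd_mul, Matrix.det_mul, Matrix.det_mul, hA, hB, mul_pow]

theorem det_cmpd {R : Type*} [CommRing R] {n : ℕ} (j : ℕ) (hj : 1 ≤ j)
    (A : Matrix (Fin n) (Fin n) R) : (cmpd j A).det = A.det ^ (n - 1).choose (j - 1) := by
  let P := MvPolynomial (Fin n × Fin n) ℤ
  let X : Matrix (Fin n) (Fin n) P := Matrix.mvPolynomialX (Fin n) (Fin n) ℤ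
  have hX : (cmpd j X).det = X.det ^ (n - 1).choose (j - 1) := by
    apply IsFractionRing.injective P (FractionRing P)
    rw [← det_cmpd_map, det_cmpd_field j hj, map_pow, RingHom.map_det, RingHom.mapMatrix_apply]
  let φ : P →+* R := MvPolynomial.eval₂Hom (Int.castRingHom R) fun p => A p.1 p.2
  have hA : X.map φ = A := Matrix.mvPolynomialX_map_eval₂ _ A
  rw [← hA, det_cmpd_map, hX, map_pow, RingHom.map_det, RingHom.mapMatrix_apply]

theorem extPowMap_eq_map {R : Type*} [CommRing R] {M : Type*} [AddCommGroup M] [Module R M]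
    (j : ℕ) (f : M →ₗ[R] M) : extPowMap j f = exteriorPower.map j f := by
  apply exteriorPower.linearMap_ext
  ext v
  have h : ((extPowMap j f (exteriorPower.ιMulti R j v) : ⋀[R]^j M) : ExteriorAlgebra R M) =
      ExteriorAlgebra.map f (ExteriorAlgebra.ιMulti R j v) := rfl
  simp only [LinearMap.compAlternatingMap_apply]
  rw [h, ExteriorAlgebra.map_apply_ιMulti, exteriorPower.map_apply_ιMulti]
  rfl

/-- Let `M` be a finite free module of rank `h` over a commutative ring `R`
and `f : M → M` linear. For `1 ≤ j ≤ h`, `det (Λ^j f) = (det f)^(C(h−1, j−1))`. -/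
theorem det_exteriorPower_map (R : Type*) [CommRing R] (M : Type*) [AddCommGroup M]
    [Module R M] [Module.Free R M] [Module.Finite R M] (f : M →ₗ[R] M) (j : ℕ)
    (hj1 : 1 ≤ j) (hj2 : j ≤ Module.finrank R M) :
    LinearMap.det (extPowMap j f) =
      LinearMap.det f ^ Nat.choose (Module.finrank R M - 1) (j - 1) := by
  rcases subsingleton_or_nontrivial R with hR | hR
  · exact Subsingleton.elim _ _
  · let b := Module.finBasis R M
    rw [extPowMap_eq_map, ← LinearMap.det_toMatrix (b.exteriorPower j), toMatrix_map_eq_cmpd,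
      det_cmpd j hj1, LinearMap.det_toMatrix]
end

section
/- Let R be a commutative ring and 0 → M_1 → M_2 → M_3 → 0 a split short exact sequence of R-modules. Let n_1, n_3 ≥ 0 and set n_2 = n_1 + n_3. If Λ^{n_1+1} M_1 = 0 and Λ^{n_3+1} M_3 = 0, then there is a natural isomorphism Λ^{n_1} M_1 ⊗_R Λ^{n_3} M_3 ≅ Λ^{n_2} M_2. -/
section Helpers

open TensorProduct

theorem submodule_add_pow_le {R E : Type*} [CommRing R] [Ring E] [Algebra R E]
    (A S : Submodule R E) (h : S * A ≤ A * S) (n : ℕ) :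
    (A ⊔ S) ^ n ≤ ⨆ i : ℕ, ⨆ j : ℕ, ⨆ _ : i + j = n, A ^ i * S ^ j := by
  have hc : ∀ i : ℕ, S * A ^ i ≤ A ^ i * S := by
    intro i
    induction i with
    | zero => simp
    | succ i ih =>
      calc S * A ^ (i + 1) = (S * A ^ i) * A := by rw [pow_succ, mul_assoc]
        _ ≤ (A ^ i * S) * A := mul_le_mul' ih le_rfl
        _ = A ^ i * (S * A) := by rw [mul_assoc]
        _ ≤ A ^ i * (A * S) := mul_le_mul' le_rfl h
        _ = A ^ (i + 1) * S := by rw [pow_succ, mul_assoc]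
  induction n with
  | zero =>
    refine le_trans (le_of_eq ?_) (le_iSup_of_le 0 (le_iSup_of_le 0 (le_iSup_of_le rfl le_rfl)))
    simp
  | succ n ih =>
    rw [pow_succ']
    refine (mul_le_mul' le_rfl ih).trans ?_
    simp only [Submodule.mul_iSup, Submodule.sup_mul]
    refine iSup_le fun i => iSup_le fun j => iSup_le fun hij => sup_le ?_ ?_
    · refine le_iSup_of_le (i + 1) (le_iSup_of_le j (le_iSup_of_le (by omega) ?_))
      rw [pow_succ', mul_assoc]
    · refine le_iSup_of_le i (le_iSup_of_le (j + 1) (le_iSup_of_le (by omega) ?_))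
      rw [pow_succ', ← mul_assoc, ← mul_assoc]
      exact mul_le_mul' (hc i) le_rfl

theorem submodule_add_pow_le_top {R E : Type*} [CommRing R] [Ring E] [Algebra R E]
    (A S : Submodule R E) (h : S * A ≤ A * S) (a b : ℕ) (hA : A ^ (a + 1) = ⊥)
    (hS : S ^ (b + 1) = ⊥) :
    (A ⊔ S) ^ (a + b) ≤ A ^ a * S ^ b := by
  refine (submodule_add_pow_le A S h _).trans ?_
  refine iSup_le fun i => iSup_le fun j => iSup_le fun hij => ?_
  rcases lt_trichotomy i a with hi | hi | hi
  · obtain ⟨k, rfl⟩ : ∃ k, j = b + 1 + k := ⟨j - (b + 1), by omega⟩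
    rw [pow_add S, hS, Submodule.bot_mul, Submodule.mul_bot]
    exact bot_le
  · obtain rfl : j = b := by omega
    rw [hi]
  · obtain ⟨k, rfl⟩ : ∃ k, i = a + 1 + k := ⟨i - (a + 1), by omega⟩
    rw [pow_add A, hA, Submodule.bot_mul, Submodule.bot_mul]
    exact bot_le

theorem exteriorPower_map_eq {R M N : Type*} [CommRing R] [AddCommGroup M] [Module R M]
    [AddCommGroup N] [Module R N] (f : M →ₗ[R] N) (n : ℕ) :
    Submodule.map (ExteriorAlgebra.map f).toLinearMap (⋀[R]^n M) =
      (Submodule.map (ExteriorAlgebra.ι R) (LinearMap.range f)) ^ n := by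
  rw [ExteriorAlgebra.exteriorPower, Submodule.map_pow, ← LinearMap.range_comp,
    ← LinearMap.range_comp, ExteriorAlgebra.map_comp_ι]

/-- The algebra map from the exterior algebra to the graded tensor product. -/
noncomputable def toGraded {R M₁ M₂ M₃ : Type*} [CommRing R]
    [AddCommGroup M₁] [Module R M₁] [AddCommGroup M₂] [Module R M₂]
    [AddCommGroup M₃] [Module R M₃] (p : M₂ →ₗ[R] M₁) (q : M₂ →ₗ[R] M₃) :
    ExteriorAlgebra R M₂ →ₐ[R]
      (GradedTensorProduct R (CliffordAlgebra.evenOdd (0 : QuadraticForm R M₁))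
        (CliffordAlgebra.evenOdd (0 : QuadraticForm R M₃))) :=
  ExteriorAlgebra.lift R ⟨(CliffordAlgebra.ofProd (0 : QuadraticForm R M₁)
    (0 : QuadraticForm R M₃)).toLinearMap ∘ₗ CliffordAlgebra.ι _ ∘ₗ p.prod q, fun m => by
      simp only [LinearMap.comp_apply, AlgHom.toLinearMap_apply]
      rw [← map_mul, CliffordAlgebra.ι_sq_scalar]
      simp⟩

theorem toGraded_ι {R M₁ M₂ M₃ : Type*} [CommRing R]
    [AddCommGroup M₁] [Module R M₁] [AddCommGroup M₂] [Module R M₂]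
    [AddCommGroup M₃] [Module R M₃] (p : M₂ →ₗ[R] M₁) (q : M₂ →ₗ[R] M₃) (m : M₂) :
    toGraded p q (ExteriorAlgebra.ι R m) =
      GradedTensorProduct.includeLeft _ _ (ExteriorAlgebra.ι R (p m)) +
      GradedTensorProduct.includeRight _ _ (ExteriorAlgebra.ι R (q m)) := by
  rw [toGraded, ExteriorAlgebra.lift_ι_apply]
  exact CliffordAlgebra.ofProd_ι_mk _ _ _ _

theorem toGraded_mul {R M₁ M₂ M₃ : Type*} [CommRing R]
    [AddCommGroup M₁] [Module R M₁] [AddCommGroup M₂] [Module R M₂]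
    [AddCommGroup M₃] [Module R M₃] (p : M₂ →ₗ[R] M₁) (q : M₂ →ₗ[R] M₃)
    (i : M₁ →ₗ[R] M₂) (s : M₃ →ₗ[R] M₂) (hpi : ∀ x, p (i x) = x) (hqi : ∀ x, q (i x) = 0)
    (hps : ∀ x, p (s x) = 0) (hqs : ∀ x, q (s x) = x)
    (a : ExteriorAlgebra R M₁) (b : ExteriorAlgebra R M₃) :
    (GradedTensorProduct.of R _ _).symm
      (toGraded p q (ExteriorAlgebra.map i a * ExteriorAlgebra.map s b)) = a ⊗ₜ[R] b := by
  have h1 : (toGraded p q).comp (ExteriorAlgebra.map i) =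
      GradedTensorProduct.includeLeft _ _ := by
    apply ExteriorAlgebra.hom_ext
    ext x
    simp only [LinearMap.comp_apply, AlgHom.toLinearMap_apply, AlgHom.comp_apply,
      ExteriorAlgebra.map_apply_ι, toGraded_ι, hpi, hqi, map_zero, add_zero]
  have h2 : (toGraded p q).comp (ExteriorAlgebra.map s) =
      GradedTensorProduct.includeRight _ _ := by
    apply ExteriorAlgebra.hom_ext
    ext x
    simp only [LinearMap.comp_apply, AlgHom.toLinearMap_apply, AlgHom.comp_apply,
      ExteriorAlgebra.map_apply_ι, toGraded_ι, hps, hqs, map_zero, zero_add]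
  have h1' := DFunLike.congr_fun h1 a
  have h2' := DFunLike.congr_fun h2 b
  rw [AlgHom.comp_apply] at h1' h2'
  rw [map_mul, h1', h2', GradedTensorProduct.includeLeft_apply,
    GradedTensorProduct.includeRight_apply, GradedTensorProduct.tmul_one_mul_one_tmul,
    GradedTensorProduct.of_symm_of]

/-- Projection of the exterior algebra to its degree `n` part. -/
noncomputable def extProj (R M : Type*) [CommRing R] [AddCommGroup M] [Module R M] (n : ℕ) :
    ExteriorAlgebra R M →ₗ[R] ⋀[R]^n M :=
  DirectSum.component R ℕ (fun i => ⋀[R]^i M) n ∘ₗ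
    (DirectSum.decomposeLinearEquiv (fun i : ℕ => ⋀[R]^i M)).toLinearMap

theorem extProj_coe (R M : Type*) [CommRing R] [AddCommGroup M] [Module R M] (n : ℕ)
    (x : ⋀[R]^n M) : extProj R M n x = x := by
  simp only [extProj, LinearMap.comp_apply, LinearEquiv.coe_coe,
    DirectSum.decomposeLinearEquiv_apply, DirectSum.decompose_coe]
  exact DirectSum.of_eq_same _ _

end Helpers

open TensorProduct in
/-- Let `0 → M₁ → M₂ → M₃ → 0` be a split short exact sequence of
`R`-modules, `n₂ = n₁ + n₃`. If `Λ^{n₁+1} M₁ = 0` and `Λ^{n₃+1} M₃ = 0`, then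
`Λ^{n₁} M₁ ⊗ Λ^{n₃} M₃ ≅ Λ^{n₂} M₂`. -/
theorem exteriorPower_split_ses (R : Type*) [CommRing R] (M₁ M₂ M₃ : Type*)
    [AddCommGroup M₁] [Module R M₁] [AddCommGroup M₂] [Module R M₂]
    [AddCommGroup M₃] [Module R M₃]
    (ι : M₁ →ₗ[R] M₂) (π : M₂ →ₗ[R] M₃) (hι : Function.Injective ι)
    (hπ : Function.Surjective π) (hexact : LinearMap.range ι = LinearMap.ker π)
    (s : M₃ →ₗ[R] M₂) (hs : π ∘ₗ s = LinearMap.id)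
    (n₁ n₃ : ℕ) (h₁ : Subsingleton (⋀[R]^(n₁+1) M₁)) (h₃ : Subsingleton (⋀[R]^(n₃+1) M₃)) :
    Nonempty (((⋀[R]^n₁ M₁) ⊗[R] (⋀[R]^n₃ M₃)) ≃ₗ[R] ⋀[R]^(n₁+n₃) M₂) := by
  have hπs : ∀ x, π (s x) = x := fun x => DFunLike.congr_fun hs x
  have hπι : ∀ x, π (ι x) = 0 := fun x => by
    have : ι x ∈ LinearMap.ker π := hexact ▸ LinearMap.mem_range_self ι x
    exact this
  have hmem : ∀ m, m - s (π m) ∈ LinearMap.range ι := fun m => by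
    rw [hexact, LinearMap.mem_ker, map_sub, hπs, sub_self]
  -- the retraction of `ι`
  let p : M₂ →ₗ[R] M₁ := (LinearEquiv.ofInjective ι hι).symm.toLinearMap ∘ₗ
    (LinearMap.id - s ∘ₗ π).codRestrict (LinearMap.range ι) hmem
  have hp : ∀ m, ι (p m) = m - s (π m) := fun m => by
    have := congrArg Subtype.val ((LinearEquiv.ofInjective ι hι).apply_symm_apply
      ((LinearMap.id - s ∘ₗ π).codRestrict (LinearMap.range ι) hmem m))
    exact this
  have hpι : ∀ x, p (ι x) = x := fun x => hι (by rw [hp, hπι, map_zero, sub_zero])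
  have hps : ∀ x, p (s x) = 0 := fun x => hι (by rw [hp, hπs, sub_self, map_zero])
  let A := Submodule.map (ExteriorAlgebra.ι R) (LinearMap.range ι)
  let S := Submodule.map (ExteriorAlgebra.ι R) (LinearMap.range s)
  have hAn : ∀ n, Submodule.map (ExteriorAlgebra.map ι).toLinearMap (⋀[R]^n M₁) = A ^ n :=
    exteriorPower_map_eq ι
  have hSn : ∀ n, Submodule.map (ExteriorAlgebra.map s).toLinearMap (⋀[R]^n M₃) = S ^ n :=
    exteriorPower_map_eq s
  have hA0 : A ^ (n₁ + 1) = ⊥ := by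
    rw [← hAn, (Submodule.subsingleton_iff_eq_bot).1 h₁, Submodule.map_bot]
  have hS0 : S ^ (n₃ + 1) = ⊥ := by
    rw [← hSn, (Submodule.subsingleton_iff_eq_bot).1 h₃, Submodule.map_bot]
  have hAS : A ⊔ S = LinearMap.range (ExteriorAlgebra.ι R (M := M₂)) := by
    rw [← Submodule.map_sup, LinearMap.range_eq_map (ExteriorAlgebra.ι R (M := M₂))]
    congr 1
    rw [eq_top_iff]
    intro m _
    rw [← sub_add_cancel m (s (π m))]
    exact Submodule.add_mem_sup (hmem m) (LinearMap.mem_range_self _ _)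
  have hcomm : S * A ≤ A * S := by
    rw [Submodule.mul_le]
    rintro _ ⟨x, hx, rfl⟩ _ ⟨y, hy, rfl⟩
    rw [eq_neg_of_add_eq_zero_left (ExteriorAlgebra.ι_add_mul_swap (R := R) x y)]
    exact neg_mem (Submodule.mul_mem_mul (Submodule.mem_map_of_mem hy)
      (Submodule.mem_map_of_mem hx))
  have hle : (⋀[R]^(n₁+n₃) M₂) ≤ A ^ n₁ * S ^ n₃ := by
    rw [ExteriorAlgebra.exteriorPower, ← hAS]
    exact submodule_add_pow_le_top A S hcomm _ _ hA0 hS0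
  have hge : A ^ n₁ * S ^ n₃ ≤ (⋀[R]^(n₁+n₃) M₂) := by
    rw [ExteriorAlgebra.exteriorPower, ← hAS, pow_add]
    exact mul_le_mul' (pow_le_pow_left' le_sup_left _)
      (pow_le_pow_left' le_sup_right _)
  -- the multiplication map
  let f : ((⋀[R]^n₁ M₁) ⊗[R] (⋀[R]^n₃ M₃)) →ₗ[R] ExteriorAlgebra R M₂ :=
    LinearMap.mul' R _ ∘ₗ TensorProduct.map
      ((ExteriorAlgebra.map ι).toLinearMap ∘ₗ (⋀[R]^n₁ M₁).subtype)
      ((ExteriorAlgebra.map s).toLinearMap ∘ₗ (⋀[R]^n₃ M₃).subtype)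
  have hf : ∀ a b, f (a ⊗ₜ b) =
      ExteriorAlgebra.map ι (a : ExteriorAlgebra R M₁) *
        ExteriorAlgebra.map s (b : ExteriorAlgebra R M₃) := fun a b => rfl
  have hrange : LinearMap.range f = ⋀[R]^(n₁+n₃) M₂ := by
    apply le_antisymm
    · rintro _ ⟨x, rfl⟩
      induction x using TensorProduct.induction_on with
      | zero => rw [map_zero]; exact zero_mem _
      | add x y hx hy => rw [map_add]; exact add_mem hx hy
      | tmul a b =>
        rw [hf]
        apply hge
        rw [← hAn, ← hSn]
        exact Submodule.mul_mem_mul (Submodule.mem_map_of_mem (f :=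
          (ExteriorAlgebra.map ι).toLinearMap) a.2) (Submodule.mem_map_of_mem (f :=
          (ExteriorAlgebra.map s).toLinearMap) b.2)
    · refine hle.trans ?_
      rw [← hAn, ← hSn, Submodule.mul_le]
      rintro _ ⟨x, hx, rfl⟩ _ ⟨y, hy, rfl⟩
      exact ⟨(⟨x, hx⟩ : ⋀[R]^n₁ M₁) ⊗ₜ (⟨y, hy⟩ : ⋀[R]^n₃ M₃), rfl⟩
  have hinj : Function.Injective f := by
    let g : ExteriorAlgebra R M₂ →ₗ[R] ((⋀[R]^n₁ M₁) ⊗[R] (⋀[R]^n₃ M₃)) :=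
      TensorProduct.map (extProj R M₁ n₁) (extProj R M₃ n₃) ∘ₗ
        (GradedTensorProduct.of R _ _).symm.toLinearMap ∘ₗ (toGraded p π).toLinearMap
    have hgf : g ∘ₗ f = LinearMap.id := by
      apply TensorProduct.ext'
      intro a b
      have h := toGraded_mul p π ι s hpι hπι hps hπs a b
      have : g (f (a ⊗ₜ b)) = TensorProduct.map (extProj R M₁ n₁) (extProj R M₃ n₃)
          ((a : ExteriorAlgebra R M₁) ⊗ₜ[R] (b : ExteriorAlgebra R M₃)) :=
        congrArg _ h
      rw [LinearMap.comp_apply, this, TensorProduct.map_tmul, extProj_coe, extProj_coe]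
      rfl
    exact Function.LeftInverse.injective (g := g) (fun x => DFunLike.congr_fun hgf x)
  exact ⟨(LinearEquiv.ofInjective f hinj).trans (LinearEquiv.ofEq _ _ hrange)⟩
end
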